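/- Let K ≥ 1 and for each k ∈ {1,…,K} let 0 < p̂_k < q̂_k and σ_k² > 0. Define f_{U_k}(u) := (e^{−(u−σ_k²)/q̂_k} − e^{−(u−σ_k²)/p̂_k})/(q̂_k − p̂_k) and f_{V_k}(v) := (1/q̂_k) e^{−(v−σ_k²)/q̂_k} for arguments ≥ σ_k² (0 otherwise), and for integers n ≥ 2 define the smoothed densities f_{U_k}^{(n)}(x) := ∫_{σ_k²}^∞ (n^n x^{n−1}/((n−1)! u^n)) e^{−nx/u} f_{U_k}(u) du and f_{V_k}^{(n)}(x) := ∫_{σ_k²}^∞ (n^n x^{n−1}/((n−1)! v^n)) e^{−nx/v} f_{V_k}(v) dv for x > 0. Then lim_{n→∞} (1/2) ∫_{(0,∞)^K} |∏_{k=1}^K f_{U_k}^{(n)}(y_k) − ∏_{k=1}^K f_{V_k}^{(n)}(y_k)| dy = (1/2) ∫_{ℝ^K} |∏_{k=1}^K f_{U_k}(y_k) − ∏_{k=1}^K f_{V_k}(y_k)| dy. -/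

import Mathlib

open MeasureTheory Real Set Filter

/-- The weight `n ^ n * s ^ (n - 2) * exp (-n * s) / (n - 1)!` with `n = m + 2`: the density of
the `Gamma(n, n)` law divided by its argument. -/
noncomputable def gammaWeight (m : ℕ) (s : ℝ) : ℝ :=
  ((m : ℝ) + 2) ^ (m + 2) / (Nat.factorial (m + 1) : ℝ) * (s ^ m * Real.exp (-(((m : ℝ) + 2) * s)))

lemma gammaWeight_nonneg (m : ℕ) {s : ℝ} (hs : 0 < s) : 0 ≤ gammaWeight m s := by
  unfold gammaWeight; positivity

@[fun_prop]
lemma continuous_gammaWeight (m : ℕ) : Continuous (gammaWeight m) := by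
  unfold gammaWeight; fun_prop

lemma integral_pow_mul_exp_neg_mul_Ioi (j : ℕ) {r : ℝ} (hr : 0 < r) :
    ∫ s in Ioi (0 : ℝ), s ^ j * Real.exp (-(r * s)) = (Nat.factorial j : ℝ) / r ^ (j + 1) := by
  have h := Real.integral_rpow_mul_exp_neg_mul_Ioi (a := (j : ℝ) + 1) (r := r) (by positivity) hr
  rw [Real.Gamma_nat_eq_factorial] at h
  simp only [add_sub_cancel_right, Real.rpow_natCast] at h
  rw [h, show ((j : ℝ) + 1) = ((j + 1 : ℕ) : ℝ) by push_cast; ring, Real.rpow_natCast, one_div,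
    inv_pow]
  field_simp

lemma integrableOn_pow_mul_exp_neg_mul_Ioi (j : ℕ) {r : ℝ} (hr : 0 < r) :
    IntegrableOn (fun s : ℝ => s ^ j * Real.exp (-(r * s))) (Ioi 0) := by
  by_contra h
  have h0 := integral_undef h
  rw [integral_pow_mul_exp_neg_mul_Ioi j hr] at h0
  have : 0 < (Nat.factorial j : ℝ) / r ^ (j + 1) := by positivity
  exact this.ne' h0

lemma integrableOn_gammaWeight_mul_pow (m j : ℕ) :
    IntegrableOn (fun s => gammaWeight m s * s ^ j) (Ioi 0) := by
  have := (integrableOn_pow_mul_exp_neg_mul_Ioi (m + j) (r := (m : ℝ) + 2)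
    (by positivity)).const_mul (((m : ℝ) + 2) ^ (m + 2) / (Nat.factorial (m + 1) : ℝ))
  refine this.congr (Eventually.of_forall fun s => ?_)
  simp only [gammaWeight]; ring

lemma integrableOn_gammaWeight (m : ℕ) : IntegrableOn (gammaWeight m) (Ioi 0) := by
  simpa using integrableOn_gammaWeight_mul_pow m 0

lemma integral_gammaWeight_mul_pow (m j : ℕ) :
    ∫ s in Ioi (0 : ℝ), gammaWeight m s * s ^ j =
      ((m : ℝ) + 2) ^ (m + 2) / (Nat.factorial (m + 1) : ℝ) *
        ((Nat.factorial (m + j) : ℝ) / ((m : ℝ) + 2) ^ (m + j + 1)) := by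
  rw [← integral_pow_mul_exp_neg_mul_Ioi (m + j) (by positivity), ← integral_const_mul]
  congr 1; ext s
  simp only [gammaWeight]; ring

lemma integral_gammaWeight (m : ℕ) :
    ∫ s in Ioi (0 : ℝ), gammaWeight m s = ((m : ℝ) + 2) / (m + 1) := by
  have h := integral_gammaWeight_mul_pow m 0
  simp only [pow_zero, mul_one, add_zero] at h
  rw [h, Nat.factorial_succ]
  push_cast
  have := Nat.factorial_pos m
  field_simp
  ring

lemma integral_gammaWeight_mul_id (m : ℕ) :
    ∫ s in Ioi (0 : ℝ), gammaWeight m s * s = 1 := by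
  have h := integral_gammaWeight_mul_pow m 1
  simp only [pow_one] at h
  rw [h]
  have := Nat.factorial_pos (m + 1)
  field_simp

lemma integral_gammaWeight_mul_sq (m : ℕ) :
    ∫ s in Ioi (0 : ℝ), gammaWeight m s * s ^ 2 = 1 := by
  rw [integral_gammaWeight_mul_pow m 2, Nat.factorial_succ (m + 1)]
  push_cast
  have := Nat.factorial_pos (m + 1)
  field_simp
  ring

lemma integrableOn_gammaWeight_mul_sub_one_sq (m : ℕ) :
    IntegrableOn (fun s => gammaWeight m s * (s - 1) ^ 2) (Ioi 0) := by
  refine (((integrableOn_gammaWeight_mul_pow m 2).sub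
    ((integrableOn_gammaWeight_mul_pow m 1).const_mul 2)).add
      (integrableOn_gammaWeight m)).congr (Eventually.of_forall fun s => ?_)
  simp only [Pi.add_apply, Pi.sub_apply]; ring

lemma integral_gammaWeight_mul_sub_one_sq (m : ℕ) :
    ∫ s in Ioi (0 : ℝ), gammaWeight m s * (s - 1) ^ 2 = 1 / ((m : ℝ) + 1) := by
  have h2 := integrableOn_gammaWeight_mul_pow m 2
  have h1 : IntegrableOn (fun s => 2 * (gammaWeight m s * s)) (Ioi 0) := by
    simpa only [pow_one] using! (integrableOn_gammaWeight_mul_pow m 1).const_mul 2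
  have : ∀ s, gammaWeight m s * (s - 1) ^ 2 =
      gammaWeight m s * s ^ 2 - 2 * (gammaWeight m s * s) + gammaWeight m s := fun s => by ring
  simp only [this]
  have h3 : IntegrableOn (fun s => gammaWeight m s * s ^ 2 - 2 * (gammaWeight m s * s)) (Ioi 0) :=
    h2.sub h1
  rw [integral_add h3 (integrableOn_gammaWeight m), integral_sub h2 h1,
    integral_const_mul, integral_gammaWeight_mul_id, integral_gammaWeight_mul_sq,
    integral_gammaWeight]
  field_simp
  ring

/-- The average of `s ↦ f (x / s)` against `gammaWeight m`; for `x > 0` this is the smoothing of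
`f` by the `Gamma(n, n / u)` kernel with `n = m + 2`. -/
noncomputable def gammaSmooth (m : ℕ) (f : ℝ → ℝ) (x : ℝ) : ℝ :=
  ∫ s in Ioi (0 : ℝ), gammaWeight m s * f (x / s)

lemma setIntegral_gammaKernel_eq_gammaSmooth (m : ℕ) (f : ℝ → ℝ) {x : ℝ} (hx : 0 < x) :
    ∫ u in Ioi (0 : ℝ), ((m : ℝ) + 2) ^ (m + 2) * x ^ (m + 1) /
        ((Nat.factorial (m + 1) : ℝ) * u ^ (m + 2)) * Real.exp (-(((m : ℝ) + 2) * x) / u) * f u =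
      gammaSmooth m f x := by
  set F : ℝ → ℝ := fun u => ((m : ℝ) + 2) ^ (m + 2) * x ^ (m + 1) /
        ((Nat.factorial (m + 1) : ℝ) * u ^ (m + 2)) * Real.exp (-(((m : ℝ) + 2) * x) / u) * f u
    with hF
  have h1 := integral_comp_mul_left_Ioi F 0 hx
  have h2 := integral_comp_rpow_Ioi (fun v => F (x * v)) (p := -1) (by norm_num)
  rw [mul_zero] at h1
  have h3 : ∫ u in Ioi (0 : ℝ), F u = x * ∫ v in Ioi (0 : ℝ), F (x * v) := by
    rw [h1, smul_eq_mul]; field_simp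
  change ∫ u in Ioi (0 : ℝ), F u = _
  rw [h3, ← h2, ← integral_const_mul, gammaSmooth]
  refine setIntegral_congr_fun measurableSet_Ioi fun s hs => ?_
  have hs : 0 < s := hs
  have e : s ^ ((-1 : ℝ) - 1) = (s ^ 2)⁻¹ := by
    rw [show (-1 : ℝ) - 1 = -((2 : ℕ) : ℝ) by norm_num, Real.rpow_neg hs.le, Real.rpow_natCast]
  simp only [hF, gammaWeight, e, Real.rpow_neg_one, smul_eq_mul, abs_neg, abs_one, one_mul]
  have e2 : -(((m : ℝ) + 2) * x) / (x * s⁻¹) = -(((m : ℝ) + 2) * s) := by field_simp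
  rw [e2, ← div_eq_mul_inv, div_pow]
  field_simp
  ring

lemma stronglyMeasurable_gammaSmooth (m : ℕ) {f : ℝ → ℝ} (hf : Measurable f) :
    StronglyMeasurable (gammaSmooth m f) := by
  unfold gammaSmooth
  refine StronglyMeasurable.integral_prod_right
    (f := fun x s : ℝ => gammaWeight m s * f (x / s)) ?_
  have : Measurable (gammaWeight m) := (continuous_gammaWeight m).measurable
  exact Measurable.stronglyMeasurable (by fun_prop)

lemma integrableOn_gammaWeight_mul_comp (m : ℕ) {f : ℝ → ℝ} (hf : Measurable f) {M : ℝ}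
    (hM : ∀ u, |f u| ≤ M) (x : ℝ) :
    IntegrableOn (fun s => gammaWeight m s * f (x / s)) (Ioi 0) := by
  refine (integrableOn_gammaWeight m).mul_bdd (c := M) ?_ (Eventually.of_forall fun s => hM _)
  exact Measurable.aestronglyMeasurable (by fun_prop)

lemma abs_gammaSmooth_le (m : ℕ) {f : ℝ → ℝ} {M : ℝ}
    (hM : ∀ u, |f u| ≤ M * (1 + u ^ 2)⁻¹) {x : ℝ} (hx : 0 < x) :
    |gammaSmooth m f x| ≤ 3 * M * (1 + x ^ 2)⁻¹ := by
  have hM0 : 0 ≤ M := by simpa using (abs_nonneg _).trans (hM 0)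
  have h1 : |gammaSmooth m f x| ≤ 2 * M := by
    have : ‖gammaSmooth m f x‖ ≤ ∫ s in Ioi (0 : ℝ), gammaWeight m s * M := by
      refine norm_integral_le_of_norm_le ((integrableOn_gammaWeight m).mul_const M) ?_
      filter_upwards [ae_restrict_mem measurableSet_Ioi] with s hs
      rw [norm_mul, Real.norm_of_nonneg (gammaWeight_nonneg m hs)]
      refine mul_le_mul_of_nonneg_left ((hM _).trans ?_) (gammaWeight_nonneg m hs)
      exact mul_le_of_le_one_right hM0 (inv_le_one_of_one_le₀ (by nlinarith [sq_nonneg (x / s)]))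
    rw [integral_mul_const, integral_gammaWeight] at this
    refine this.trans (mul_le_mul_of_nonneg_right ?_ hM0)
    rw [div_le_iff₀ (by positivity)]
    linarith [(Nat.cast_nonneg m : (0 : ℝ) ≤ m)]
  have h2 : |gammaSmooth m f x| ≤ M / x ^ 2 := by
    have : ‖gammaSmooth m f x‖ ≤ ∫ s in Ioi (0 : ℝ), gammaWeight m s * s ^ 2 * (M / x ^ 2) := by
      refine norm_integral_le_of_norm_le
        ((integrableOn_gammaWeight_mul_pow m 2).mul_const _) ?_
      filter_upwards [ae_restrict_mem measurableSet_Ioi] with s hs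
      have hs : 0 < s := hs
      rw [norm_mul, Real.norm_of_nonneg (gammaWeight_nonneg m hs), mul_assoc]
      refine mul_le_mul_of_nonneg_left ((hM _).trans ?_) (gammaWeight_nonneg m hs)
      rw [show s ^ 2 * (M / x ^ 2) = M * ((x / s) ^ 2)⁻¹ by field_simp]
      gcongr
      linarith
    rwa [integral_mul_const, integral_gammaWeight_mul_sq, one_mul] at this
  rw [le_div_iff₀ (by positivity)] at h2
  rw [← div_eq_mul_inv, le_div_iff₀ (by positivity)]
  linarith

lemma tendsto_gammaSmooth {f : ℝ → ℝ} (hf : Measurable f) {M : ℝ}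
    (hM : ∀ u, |f u| ≤ M) {x : ℝ} (hc : ContinuousAt f x) :
    Tendsto (fun m => gammaSmooth m f x) atTop (nhds (f x)) := by
  have hinv : Tendsto (fun m : ℕ => 1 / ((m : ℝ) + 1)) atTop (nhds 0) :=
    tendsto_one_div_add_atTop_nhds_zero_nat
  have hmass : Tendsto (fun m : ℕ => (((m : ℝ) + 2) / (m + 1)) * f x) atTop (nhds (f x)) := by
    have : Tendsto (fun m : ℕ => (1 + 1 / ((m : ℝ) + 1)) * f x) atTop (nhds ((1 + 0) * f x)) :=
      (hinv.const_add 1).mul_const _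
    simp only [add_zero, one_mul] at this
    refine this.congr fun m => ?_
    congr 1
    field_simp
    ring
  suffices h : Tendsto (fun m => gammaSmooth m f x - (((m : ℝ) + 2) / (m + 1)) * f x) atTop
      (nhds 0) by simpa using h.add hmass
  have hφ : ContinuousAt (fun s => f (x / s)) 1 :=
    ContinuousAt.comp_of_eq (g := f) hc (continuousAt_const.div continuousAt_id one_ne_zero)
      (by simp)
  have hM0 : 0 ≤ M := (abs_nonneg _).trans (hM 0)
  rw [Metric.tendsto_atTop]
  intro ε hε
  obtain ⟨δ, hδ, hφδ⟩ := Metric.continuousAt_iff.mp hφ (ε / 4) (by positivity)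
  have key : ∀ m : ℕ, |gammaSmooth m f x - (((m : ℝ) + 2) / (m + 1)) * f x| ≤
      ((m : ℝ) + 2) / (m + 1) * (ε / 4) + 1 / ((m : ℝ) + 1) * (2 * M / δ ^ 2) := by
    intro m
    have hw : Integrable (gammaWeight m) (volume.restrict (Ioi 0)) := integrableOn_gammaWeight m
    have hsq : Integrable (fun s => gammaWeight m s * (s - 1) ^ 2) (volume.restrict (Ioi 0)) :=
      integrableOn_gammaWeight_mul_sub_one_sq m
    rw [← integral_gammaWeight m, gammaSmooth, ← integral_mul_const, ← integral_sub
      (integrableOn_gammaWeight_mul_comp m hf hM x) (hw.mul_const _),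
      ← integral_gammaWeight_mul_sub_one_sq m, ← integral_mul_const, ← integral_mul_const,
      ← integral_add (hw.mul_const _) (hsq.mul_const _),
      ← Real.norm_eq_abs]
    refine norm_integral_le_of_norm_le ((hw.mul_const _).add (hsq.mul_const _)) ?_
    filter_upwards [ae_restrict_mem measurableSet_Ioi] with s hs
    rw [← mul_sub, norm_mul, Real.norm_of_nonneg (gammaWeight_nonneg m hs), mul_assoc, ← mul_add]
    refine mul_le_mul_of_nonneg_left ?_ (gammaWeight_nonneg m hs)
    rw [Real.norm_eq_abs]
    by_cases hd : dist s 1 < δ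
    · have := hφδ hd
      rw [Real.dist_eq, div_one] at this
      have : 0 ≤ (s - 1) ^ 2 * (2 * M / δ ^ 2) := by positivity
      linarith
    · rw [Real.dist_eq, not_lt] at hd
      have hsq : δ ^ 2 ≤ (s - 1) ^ 2 := by
        rw [← sq_abs (s - 1)]; gcongr
      have h1 : 2 * M ≤ (s - 1) ^ 2 * (2 * M / δ ^ 2) := by
        rw [mul_div_assoc', le_div_iff₀ (by positivity), mul_comm]
        gcongr
      have h2 := abs_sub (f (x / s)) (f x)
      linarith [hM (x / s), hM x]
  have hsmall : ∀ᶠ m : ℕ in atTop, 1 / ((m : ℝ) + 1) * (2 * M / δ ^ 2) < ε / 2 := by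
    have := hinv.mul_const (2 * M / δ ^ 2)
    rw [zero_mul] at this
    exact this.eventually (gt_mem_nhds (by positivity))
  obtain ⟨N, hN⟩ := eventually_atTop.mp hsmall
  refine ⟨N, fun m hm => ?_⟩
  rw [Real.dist_eq, sub_zero]
  refine (key m).trans_lt ?_
  have h2 : ((m : ℝ) + 2) / (m + 1) ≤ 2 := by
    rw [div_le_iff₀ (by positivity)]
    linarith [(Nat.cast_nonneg m : (0 : ℝ) ≤ m)]
  have := mul_le_mul_of_nonneg_right h2 (show 0 ≤ ε / 4 by positivity)
  linarith [hN m hm]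

lemma exp_neg_sub_div_le {a q u : ℝ} (ha : 0 < a) (hq : 0 < q) (hu : a ≤ u) :
    Real.exp (-(u - a) / q) ≤ (1 + 2 * a ^ 2 + 4 * q ^ 2) * (1 + u ^ 2)⁻¹ := by
  have ht : 0 ≤ (u - a) / q := div_nonneg (by linarith) hq.le
  have h := Real.quadratic_le_exp_of_nonneg ht
  rw [neg_div, Real.exp_neg, ← div_eq_mul_inv, le_div_iff₀ (by positivity),
    inv_mul_le_iff₀ (Real.exp_pos _), ← sub_nonneg]
  have h1 : 1 + ((u - a) / q) ^ 2 / 2 ≤ Real.exp ((u - a) / q) := by linarith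
  have h2 : (1 + ((u - a) / q) ^ 2 / 2) * (1 + 2 * a ^ 2 + 4 * q ^ 2) ≤
      Real.exp ((u - a) / q) * (1 + 2 * a ^ 2 + 4 * q ^ 2) := by gcongr
  have h3 : (u - a) ^ 2 = ((u - a) / q) ^ 2 * q ^ 2 := by field_simp
  have h4 : 0 ≤ ((u - a) / q) ^ 2 * (1 + 2 * a ^ 2) := by positivity
  nlinarith [sq_nonneg (u - 2 * a)]

/-- Measurable functions supported on `[a, ∞)`, continuous off `a` and dominated by a multiple of
the Cauchy density. -/
structure IsShiftedDensity (a : ℝ) (f : ℝ → ℝ) : Prop where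
  measurable : Measurable f
  eq_zero : ∀ u < a, f u = 0
  continuousAt : ∀ u ≠ a, ContinuousAt f u
  bound : ∃ M, ∀ u, |f u| ≤ M * (1 + u ^ 2)⁻¹

lemma isShiftedDensity_of_exp_bound {a q C : ℝ} (ha : 0 < a) (hq : 0 < q) {f g : ℝ → ℝ}
    (hg : Continuous g) (hfg : ∀ u, f u = if a ≤ u then g u else 0)
    (hC : ∀ u, a ≤ u → |g u| ≤ C * Real.exp (-(u - a) / q)) : IsShiftedDensity a f where
  measurable := by
    rw [funext hfg]
    exact Measurable.ite measurableSet_Ici hg.measurable measurable_const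
  eq_zero u hu := by rw [hfg, if_neg hu.not_ge]
  continuousAt u hu := by
    rcases hu.lt_or_gt with h | h
    · refine (continuousAt_const (y := (0 : ℝ))).congr ?_
      filter_upwards [gt_mem_nhds h] with v hv
      rw [hfg, if_neg hv.not_ge]
    · refine hg.continuousAt.congr ?_
      filter_upwards [lt_mem_nhds h] with v hv
      rw [hfg, if_pos hv.le]
  bound := by
    have hC0 : 0 ≤ C := by simpa using (abs_nonneg _).trans (hC a le_rfl)
    refine ⟨C * (1 + 2 * a ^ 2 + 4 * q ^ 2), fun u => ?_⟩
    rw [hfg]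
    split_ifs with h
    · refine (hC u h).trans ?_
      rw [mul_assoc]
      exact mul_le_mul_of_nonneg_left (exp_neg_sub_div_le ha hq h) hC0
    · rw [abs_zero]; positivity

lemma IsShiftedDensity.setIntegral_gammaKernel_eq {a : ℝ} (ha : 0 < a) {f : ℝ → ℝ}
    (hf : IsShiftedDensity a f) (m : ℕ) {x : ℝ} (hx : 0 < x) :
    ∫ u in Ici a, ((m + 2 : ℕ) : ℝ) ^ (m + 2) * x ^ (m + 2 - 1) /
        ((Nat.factorial (m + 2 - 1) : ℝ) * u ^ (m + 2)) *
          Real.exp (-(((m + 2 : ℕ) : ℝ) * x) / u) * f u = gammaSmooth m f x := by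
  rw [← setIntegral_gammaKernel_eq_gammaSmooth m f hx]
  push_cast
  refine (setIntegral_eq_of_subset_of_forall_sdiff_eq_zero measurableSet_Ioi
    (fun u hu => ha.trans_le hu) fun u hu => ?_).symm
  rw [hf.eq_zero u (not_le.mp hu.2), mul_zero]

theorem tendsto_integral_abs_prod_gammaSmooth_sub {ι : Type*} [Fintype ι] {a : ι → ℝ}
    (ha : ∀ k, 0 < a k) {f g : ι → ℝ → ℝ} (hf : ∀ k, IsShiftedDensity (a k) (f k))
    (hg : ∀ k, IsShiftedDensity (a k) (g k)) :
    Tendsto (fun m : ℕ => ∫ y in univ.pi fun _ : ι => Ioi (0 : ℝ),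
        |(∏ k, gammaSmooth m (f k) (y k)) - ∏ k, gammaSmooth m (g k) (y k)|) atTop
      (nhds (∫ y : ι → ℝ, |(∏ k, f k (y k)) - ∏ k, g k (y k)|)) := by
  choose M hM using fun k => (hf k).bound
  choose M' hM' using fun k => (hg k).bound
  have hms : MeasurableSet (univ.pi fun _ : ι => Ioi (0 : ℝ)) :=
    MeasurableSet.univ_pi fun _ => measurableSet_Ioi
  have hle : ∀ {M : ℝ} {f : ℝ → ℝ}, (∀ u, |f u| ≤ M * (1 + u ^ 2)⁻¹) → ∀ u, |f u| ≤ M := by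
    intro M f h u
    have hM0 : 0 ≤ M := by simpa using (abs_nonneg _).trans (h 0)
    exact (h u).trans
      (mul_le_of_le_one_right hM0 (inv_le_one_of_one_le₀ (by nlinarith [sq_nonneg u])))
  have hprod : ∀ N : ι → ℝ, Integrable fun y : ι → ℝ => ∏ k, 3 * N k * (1 + y k ^ 2)⁻¹ :=
    fun N => Integrable.fintype_prod fun k => integrable_inv_one_add_sq.const_mul _
  rw [← setIntegral_eq_integral_of_forall_compl_eq_zero
    (s := univ.pi fun _ : ι => Ioi (0 : ℝ))]
  · refine tendsto_integral_of_dominated_convergence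
      (fun y => (∏ k, 3 * M k * (1 + y k ^ 2)⁻¹) + ∏ k, 3 * M' k * (1 + y k ^ 2)⁻¹)
      (fun m => ?_) ((hprod M).add (hprod M')).integrableOn (fun m => ?_) ?_
    · have hmf k := (stronglyMeasurable_gammaSmooth m (hf k).measurable).measurable
      have hmg k := (stronglyMeasurable_gammaSmooth m (hg k).measurable).measurable
      refine Measurable.aestronglyMeasurable ?_
      fun_prop
    · filter_upwards [ae_restrict_mem hms] with y hy
      rw [Real.norm_eq_abs, abs_abs]
      refine (abs_sub _ _).trans ?_
      rw [Finset.abs_prod, Finset.abs_prod]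
      gcongr with k _ k _
      · exact abs_gammaSmooth_le m (hM k) (hy k trivial)
      · exact abs_gammaSmooth_le m (hM' k) (hy k trivial)
    · have hne : ∀ᵐ y : ι → ℝ, ∀ k, y k ≠ a k :=
        ae_all_iff.mpr fun k => Measure.ae_eval_ne (μ := fun _ : ι => (volume : Measure ℝ)) k (a k)
      filter_upwards [ae_restrict_of_ae hne] with y hy
      refine Tendsto.abs (Tendsto.sub ?_ ?_)
      · exact tendsto_finsetProd _ fun k _ =>
          tendsto_gammaSmooth (hf k).measurable (hle (hM k)) ((hf k).continuousAt _ (hy k))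
      · exact tendsto_finsetProd _ fun k _ =>
          tendsto_gammaSmooth (hg k).measurable (hle (hM' k)) ((hg k).continuousAt _ (hy k))
  · intro y hy
    simp only [mem_univ_pi, mem_Ioi, not_forall, not_lt] at hy
    obtain ⟨k, hk⟩ := hy
    have hk : y k < a k := hk.trans_lt (ha k)
    rw [Finset.prod_eq_zero (Finset.mem_univ k) ((hf k).eq_zero _ hk),
      Finset.prod_eq_zero (Finset.mem_univ k) ((hg k).eq_zero _ hk), sub_zero, abs_zero]



theorem stmt_19 (K : ℕ) (hK : 1 ≤ K) (p q σ2 : Fin K → ℝ)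
    (hp : ∀ k, 0 < p k) (hpq : ∀ k, p k < q k) (hσ : ∀ k, 0 < σ2 k)
    (fU fV : Fin K → ℝ → ℝ)
    (hfU : ∀ k x, fU k x =
      if σ2 k ≤ x then
        (Real.exp (-(x - σ2 k) / q k) - Real.exp (-(x - σ2 k) / p k)) / (q k - p k)
      else 0)
    (hfV : ∀ k x, fV k x =
      if σ2 k ≤ x then (1 / q k) * Real.exp (-(x - σ2 k) / q k) else 0)
    (fUn fVn : ℕ → Fin K → ℝ → ℝ)
    (hfUn : ∀ n : ℕ, 2 ≤ n → ∀ k, ∀ x : ℝ, 0 < x →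
      fUn n k x = ∫ u in Set.Ici (σ2 k),
        (n : ℝ) ^ n * x ^ (n - 1) / ((Nat.factorial (n - 1) : ℝ) * u ^ n) *
          Real.exp (-(n * x) / u) * fU k u)
    (hfVn : ∀ n : ℕ, 2 ≤ n → ∀ k, ∀ x : ℝ, 0 < x →
      fVn n k x = ∫ v in Set.Ici (σ2 k),
        (n : ℝ) ^ n * x ^ (n - 1) / ((Nat.factorial (n - 1) : ℝ) * v ^ n) *
          Real.exp (-(n * x) / v) * fV k v) :
    Tendsto (fun n : ℕ =>
        (1 / 2) * ∫ y in Set.univ.pi fun _ : Fin K => Set.Ioi (0 : ℝ),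
          |(∏ k, fUn n k (y k)) - ∏ k, fVn n k (y k)|)
      atTop
      (nhds ((1 / 2) * ∫ y : Fin K → ℝ, |(∏ k, fU k (y k)) - ∏ k, fV k (y k)|)) := by
  have hU : ∀ k, IsShiftedDensity (σ2 k) (fU k) := fun k => by
    have hqk : 0 < q k := (hp k).trans (hpq k)
    have hd : 0 < q k - p k := sub_pos.mpr (hpq k)
    refine isShiftedDensity_of_exp_bound (C := 1 / (q k - p k)) (hσ k) hqk (by fun_prop)
      (hfU k) fun u hu => ?_
    have hmono : Real.exp (-(u - σ2 k) / p k) ≤ Real.exp (-(u - σ2 k) / q k) := by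
      rw [Real.exp_le_exp, neg_div, neg_div, neg_le_neg_iff]
      exact div_le_div_of_nonneg_left (sub_nonneg.mpr hu) (hp k) (hpq k).le
    rw [abs_of_nonneg (div_nonneg (sub_nonneg.mpr hmono) hd.le), div_mul_eq_mul_div, one_mul]
    gcongr
    linarith [Real.exp_pos (-(u - σ2 k) / p k)]
  have hV : ∀ k, IsShiftedDensity (σ2 k) (fV k) := fun k => by
    have hqk : 0 < q k := (hp k).trans (hpq k)
    refine isShiftedDensity_of_exp_bound (C := 1 / q k) (hσ k) hqk (by fun_prop)
      (hfV k) fun u hu => ?_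
    rw [abs_of_nonneg (by positivity)]
  refine Tendsto.const_mul _ ((tendsto_add_atTop_iff_nat 2).mp ?_)
  refine (tendsto_integral_abs_prod_gammaSmooth_sub hσ hU hV).congr fun m => ?_
  refine setIntegral_congr_fun (MeasurableSet.univ_pi fun _ => measurableSet_Ioi) fun y hy => ?_
  have hy : ∀ k, 0 < y k := fun k => hy k trivial
  congr 2
  · refine Finset.prod_congr rfl fun k _ => ?_
    rw [hfUn _ (by omega) k _ (hy k), (hU k).setIntegral_gammaKernel_eq (hσ k) m (hy k)]
  · refine Finset.prod_congr rfl fun k _ => ?_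
    rw [hfVn _ (by omega) k _ (hy k), (hV k).setIntegral_gammaKernel_eq (hσ k) m (hy k)]
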